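/- Let O ⊆ ℝ^d be a set such that there exists r > 0 with the property that for every w ∈ ∂O there exists z ∈ B(w, r) with O ⊆ B̄(z, |z-w|). Then the closure of O is strictly convex, in the sense that for all x, y in the closure of O with x ≠ y and all λ ∈ (0,1), the point λx + (1-λ)y lies in the interior of O. -/

import Mathlib

/-!
Let `p` lie strictly between two distinct points of `closure O`, let `q ∈ interior O`, and suppose
`p ∉ interior O`. Then the segment from `p` to `q` meets `frontier O` at some `w`. The ball attached
to `w` is strictly convex and contains `closure O`, so its interior contains both `p` and `q`,
hence also `w`, although `w` lies on its boundary sphere.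
-/

open Metric

theorem inter_frontier_nonempty_of_isPreconnected {X : Type*} [TopologicalSpace X] {s t : Set X}
    (ht : IsPreconnected t) (hts : (t ∩ s).Nonempty) (hts' : (t ∩ sᶜ).Nonempty) :
    (t ∩ frontier s).Nonempty := by
  by_contra hempty
  have mem_interior {v : X} (hvt : v ∈ t) (hv : v ∈ closure s) : v ∈ interior s := by
    by_contra hvs
    exact hempty ⟨v, hvt, hv, hvs⟩
  have hsub : t ⊆ interior s :=
    ht.subset_of_closure_inter_subset isOpen_interior
      (hts.mono fun v hv ↦ ⟨hv.1, mem_interior hv.1 (subset_closure hv.2)⟩)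
      fun v hv ↦ mem_interior hv.2 (closure_mono interior_subset hv.1)
  obtain ⟨v, hvt, hvs⟩ := hts'
  exact hvs (interior_subset (hsub hvt))

theorem openSegment_subset_interior_of_forall_frontier_exists_strictConvex {E : Type*}
    [AddCommGroup E] [Module ℝ E] [TopologicalSpace E] [IsTopologicalAddGroup E]
    [ContinuousSMul ℝ E] {O : Set E} (hint : (interior O).Nonempty)
    (hsupp : ∀ w ∈ frontier O, ∃ K, StrictConvex ℝ K ∧ closure O ⊆ K ∧ w ∉ interior K)
    {x y : E} (hx : x ∈ closure O) (hy : y ∈ closure O) (hxy : x ≠ y) :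
    openSegment ℝ x y ⊆ interior O := by
  intro p hp
  by_contra hpO
  obtain ⟨q, hq⟩ := hint
  obtain ⟨w, hw_seg, hw_frontier⟩ : (segment ℝ p q ∩ frontier (interior O)).Nonempty :=
    inter_frontier_nonempty_of_isPreconnected (convex_segment p q).isPreconnected
      ⟨q, right_mem_segment ℝ p q, hq⟩ ⟨p, left_mem_segment ℝ p q, hpO⟩
  obtain ⟨K, hK, hOK, hwK⟩ := hsupp w (frontier_interior_subset hw_frontier)
  have hpK : p ∈ interior K := hK.openSegment_subset (hOK hx) (hOK hy) hxy hp
  have hqK : q ∈ interior K := interior_mono (subset_closure.trans hOK) hq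
  exact hwK (hK.convex.interior.segment_subset hpK hqK hw_seg)

theorem stmt_7_general {E : Type*} [NormedAddCommGroup E] [NormedSpace ℝ E] [StrictConvexSpace ℝ E]
    {O : Set E} (hint : (interior O).Nonempty)
    (hball : ∀ w ∈ frontier O, ∃ z, O ⊆ closedBall z (dist z w))
    {x y : E} (hx : x ∈ closure O) (hy : y ∈ closure O) (hxy : x ≠ y) :
    openSegment ℝ x y ⊆ interior O := by
  have : Nontrivial E := nontrivial_of_ne x y hxy
  refine openSegment_subset_interior_of_forall_frontier_exists_strictConvex hint
    (fun w hw ↦ ?_) hx hy hxy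
  obtain ⟨z, hz⟩ := hball w hw
  refine ⟨closedBall z (dist z w), strictConvex_closedBall ℝ z _,
    closure_minimal hz isClosed_closedBall, ?_⟩
  rw [interior_closedBall', mem_ball']
  exact lt_irrefl _

theorem stmt_7 (d : ℕ) (O : Set (EuclideanSpace ℝ (Fin d)))
    (hne : O.Nonempty) (hbdd : Bornology.IsBounded O) (hopen : IsOpen O)
    (hball : ∃ r > (0 : ℝ), ∀ w ∈ frontier O,
      ∃ z ∈ Metric.ball w r, O ⊆ Metric.closedBall z (dist z w)) :
    ∀ x ∈ closure O, ∀ y ∈ closure O, x ≠ y → ∀ l : ℝ, l ∈ Set.Ioo (0 : ℝ) 1 →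
      l • x + (1 - l) • y ∈ interior O := by
  obtain ⟨_, _, hball⟩ := hball
  intro x hx y hy hxy l hl
  exact stmt_7_general (by rwa [hopen.interior_eq]) (fun w hw ↦ (hball w hw).imp fun _ ↦ And.right)
    hx hy hxy ⟨l, 1 - l, hl.1, sub_pos.2 hl.2, add_sub_cancel l 1, rfl⟩
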